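/- Let P be a b-bounded and uniform AC-MAS over an infinite interpretation domain U with adom(s0) ⊆ C, let φ be an FO-CTLK formula, and let U' be an interpretation domain with C ⊆ U' and |U'| ≥ 2b + |C| + max{|vars(φ)|, N_Ag}. Then for any ⊕-abstraction P' of P over U', P ⊨ φ if and only if P' ⊨ φ. -/

import Mathlib

/-!  Common formalisation of artifact-centric multi-agent systems (AC-MAS). -/

open Set

/-- A database schema: a finite type of relation symbols, each with an arity. -/
structure Schema : Type 1 where
  Rel : Type
  [relFin : Fintype Rel]
  arity : Rel → ℕ

attribute [instance] Schema.relFin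

/-- A `D`-instance over an interpretation domain `U`: every relation symbol is
interpreted as a finite set of tuples over `U`. -/
structure Inst (D : Schema) (U : Type) : Type where
  rel : ∀ r : D.Rel, Set (Fin (D.arity r) → U)
  finite : ∀ r, (rel r).Finite

/-- The active domain of an instance. -/
def Inst.adom {D : Schema} {U : Type} (I : Inst D U) : Set U :=
  { u | ∃ (r : D.Rel) (t : Fin (D.arity r) → U), t ∈ I.rel r ∧ ∃ j, t j = u }

/-- The schema `D` together with a primed copy of every relation symbol. -/
def Schema.double (D : Schema) : Schema where
  Rel := D.Rel ⊕ D.Rel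
  relFin := inferInstance
  arity := Sum.elim D.arity D.arity

/-- The disjunctive join `I ⊕ J`: unprimed symbols are interpreted as in `I`,
primed symbols as in `J`. -/
def Inst.oplus {D : Schema} {U : Type} (I J : Inst D U) : Inst D.double U where
  rel := fun r => match r with
    | .inl r₀ => I.rel r₀
    | .inr r₀ => J.rel r₀
  finite := fun r => by
    cases r with
    | inl r₀ => exact I.finite r₀
    | inr r₀ => exact J.finite r₀

/-- Image of an instance under a map of domains. -/
def Inst.map {D : Schema} {C U : Type} (f : C → U) (I : Inst D C) : Inst D U where
  rel := fun r => (fun t => f ∘ t) '' I.rel r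
  finite := fun r => (I.finite r).image _

/-! ### First-order formulas -/

/-- Terms: variables (natural numbers) or constants from `C`. -/
abbrev Term (C : Type) := ℕ ⊕ C

def Term.varsF {C : Type} : Term C → Finset ℕ
  | .inl x => {x}
  | .inr _ => ∅

def Term.constsS {C : Type} : Term C → Set C
  | .inl _ => ∅
  | .inr c => {c}

def Term.val {C U : Type} (cst : C → U) (σ : ℕ → U) : Term C → U
  | .inl x => σ x
  | .inr c => cst c

/-- First-order formulas over schema `D`, with equality, constants from `C`
and no function symbols. -/
inductive FO (D : Schema) (C : Type) : Type where
  | eq : Term C → Term C → FO D C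
  | rel : (r : D.Rel) → (Fin (D.arity r) → Term C) → FO D C
  | not : FO D C → FO D C
  | imp : FO D C → FO D C → FO D C
  | all : ℕ → FO D C → FO D C

namespace FO

variable {D : Schema} {C : Type}

/-- Free variables. -/
def free : FO D C → Finset ℕ
  | .eq t₁ t₂ => t₁.varsF ∪ t₂.varsF
  | .rel _ ts => Finset.univ.biUnion fun j => (ts j).varsF
  | .not φ => φ.free
  | .imp φ ψ => φ.free ∪ ψ.free
  | .all x φ => φ.free.erase x

/-- All variables. -/
def vars : FO D C → Finset ℕ
  | .eq t₁ t₂ => t₁.varsF ∪ t₂.varsF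
  | .rel _ ts => Finset.univ.biUnion fun j => (ts j).varsF
  | .not φ => φ.vars
  | .imp φ ψ => φ.vars ∪ ψ.vars
  | .all x φ => insert x φ.vars

/-- Constants mentioned in a formula. -/
def consts : FO D C → Set C
  | .eq t₁ t₂ => t₁.constsS ∪ t₂.constsS
  | .rel _ ts => ⋃ j, (ts j).constsS
  | .not φ => φ.consts
  | .imp φ ψ => φ.consts ∪ ψ.consts
  | .all _ φ => φ.consts

/-- The formula mentions only relation symbols from `R`. -/
def UsesOnly (R : Set D.Rel) : FO D C → Prop
  | .eq _ _ => True
  | .rel r _ => r ∈ R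
  | .not φ => φ.UsesOnly R
  | .imp φ ψ => φ.UsesOnly R ∧ ψ.UsesOnly R
  | .all _ φ => φ.UsesOnly R

/-- Satisfaction of FO-formulas, with active-domain quantification. -/
def sat {U : Type} (cst : C → U) (I : Inst D U) : (ℕ → U) → FO D C → Prop
  | σ, .eq t₁ t₂ => t₁.val cst σ = t₂.val cst σ
  | σ, .rel r ts => (fun j => (ts j).val cst σ) ∈ I.rel r
  | σ, .not φ => ¬ sat cst I σ φ
  | σ, .imp φ ψ => sat cst I σ φ → sat cst I σ ψ
  | σ, .all x φ => ∀ u ∈ I.adom, sat cst I (Function.update σ x u) φ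

end FO

/-! ### Agents and AC-MAS -/

/-- The signature of an agent: a finite set of action types with parameter counts. -/
structure AgentSig : Type 1 where
  Act : Type
  [actFin : Fintype Act]
  np : Act → ℕ

attribute [instance] AgentSig.actFin

/-- A ground action: an action type together with ground parameters. -/
def GAct (g : AgentSig) (U : Type) : Type := Σ a : g.Act, Fin (g.np a) → U

/-- Renaming of ground-action parameters. -/
def GAct.map {g : AgentSig} {U U' : Type} (f : U → U') : GAct g U → GAct g U'
  | ⟨a, u⟩ => ⟨a, fun j => f (u j)⟩

/-- An agent: local states structured as database instances, and a protocol. -/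
structure Agent (D : Schema) (g : AgentSig) (U : Type) : Type where
  L : Set (Inst D U)
  Pr : Inst D U → Set (GAct g U)

/-- A global state: one local database instance per agent `0, …, n`
(agent `0` is the environment). -/
abbrev GState (D : Schema) (n : ℕ) (U : Type) := Fin (n+1) → Inst D U

/-- A joint (global) ground action. -/
abbrev JAct {n : ℕ} (sig : Fin (n+1) → AgentSig) (U : Type) : Type := ∀ i, GAct (sig i) U

def JAct.map {n : ℕ} {sig : Fin (n+1) → AgentSig} {U U' : Type} (f : U → U')
    (a : JAct sig U) : JAct sig U' := fun i => (a i).map f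

/-- The set of individuals occurring as parameters of a joint ground action. -/
def actElems {n : ℕ} {sig : Fin (n+1) → AgentSig} {U : Type} (a : JAct sig U) : Set U :=
  { u | ∃ (i : Fin (n+1)) (j : Fin ((sig i).np (a i).1)), (a i).2 j = u }

/-- Active domain of a family of instances (e.g. a global state). -/
def adomF {D : Schema} {X U : Type} (s : X → Inst D U) : Set U := ⋃ i, (s i).adom

/-- The global instance `D_s` associated with a global state. -/
def gInst {D : Schema} {n : ℕ} {U : Type} (s : GState D n U) : Inst D U where
  rel := fun r => ⋃ i, (s i).rel r
  finite := fun r => Set.finite_iUnion fun i => (s i).finite r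

/-- Componentwise disjunctive join of two global states. -/
def oplusG {D : Schema} {n : ℕ} {U : Type} (s t : GState D n U) : GState D.double n U :=
  fun i => (s i).oplus (t i)

/-- An artifact-centric multi-agent system. -/
structure ACMAS (D : Schema) {n : ℕ} (sig : Fin (n+1) → AgentSig) {U : Type}
    (Ag : ∀ i, Agent D (sig i) U) : Type where
  /-- set of (reachable) global states -/
  S : Set (GState D n U)
  /-- initial global state -/
  s0 : GState D n U
  s0_mem : s0 ∈ S
  states_local : ∀ s ∈ S, ∀ i, s i ∈ (Ag i).L
  /-- global transition function -/
  τ : GState D n U → JAct sig U → Set (GState D n U)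
  /-- `τ` is defined only on protocol-enabled joint actions -/
  tau_enabled : ∀ s a, (τ s a).Nonempty → ∀ i, a i ∈ (Ag i).Pr (s i)
  tau_closed : ∀ s ∈ S, ∀ a, τ s a ⊆ S

namespace ACMAS

variable {D : Schema} {n : ℕ} {sig : Fin (n+1) → AgentSig} {U : Type}
  {Ag : ∀ i, Agent D (sig i) U}

/-- The transition relation `s → t`. -/
def Tr (M : ACMAS D sig Ag) (s t : GState D n U) : Prop := ∃ a, t ∈ M.τ s a

/-- Epistemic indistinguishability for agent `i`. -/
def Epi (M : ACMAS D sig Ag) (i : Fin (n+1)) (s t : GState D n U) : Prop :=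
  s ∈ M.S ∧ t ∈ M.S ∧ s i = t i

/-- Union of the epistemic relations of agents `1, …, n`. -/
def EpiAny (M : ACMAS D sig Ag) (s t : GState D n U) : Prop :=
  ∃ i : Fin n, M.Epi i.succ s t

/-- The standard assumptions: the transition relation is serial and `S` is
exactly the set of states reachable from `s0`. -/
def Std (M : ACMAS D sig Ag) : Prop :=
  (∀ s ∈ M.S, ∃ t, M.Tr s t) ∧ M.S = { s | Relation.ReflTransGen M.Tr M.s0 s }

/-- An (infinite) run. -/
def IsRun (M : ACMAS D sig Ag) (r : ℕ → GState D n U) : Prop :=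
  (∀ k, r k ∈ M.S) ∧ ∀ k, M.Tr (r k) (r (k+1))

/-- A temporal-epistemic run. -/
def IsTERun (M : ACMAS D sig Ag) (r : ℕ → GState D n U) : Prop :=
  (∀ k, r k ∈ M.S) ∧ ∀ k, M.Tr (r k) (r (k+1)) ∨ M.EpiAny (r k) (r (k+1))

end ACMAS

/-! ### Isomorphisms and equivalent assignments -/

/-- `ι` is a witness for the isomorphism of the families `s` and `s'`:
a constant-preserving bijection between the active domains extended with the
constants, preserving all relations componentwise. -/
def IsWitness {D : Schema} {X C U U' : Type} (cst : C → U) (cst' : C → U')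
    (ι : U → U') (s : X → Inst D U) (s' : X → Inst D U') : Prop :=
  Set.BijOn ι (adomF s ∪ Set.range cst) (adomF s' ∪ Set.range cst') ∧
  (∀ c, ι (cst c) = cst' c) ∧
  ∀ (i : X) (r : D.Rel) (t : Fin (D.arity r) → U),
    (∀ j, t j ∈ adomF s ∪ Set.range cst) →
    (t ∈ (s i).rel r ↔ (fun j => ι (t j)) ∈ (s' i).rel r)

/-- Isomorphism of families of instances (in particular global states). -/
def Iso {D : Schema} {X C U U' : Type} (cst : C → U) (cst' : C → U')
    (s : X → Inst D U) (s' : X → Inst D U') : Prop :=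
  ∃ ι, IsWitness cst cst' ι s s'

/-- Equivalent assignments for a set `V` of variables w.r.t. `s` and `s'`. -/
def EqAssign {D : Schema} {n : ℕ} {C U U' : Type} (cst : C → U) (cst' : C → U')
    (V : Set ℕ) (σ : ℕ → U) (σ' : ℕ → U')
    (s : GState D n U) (s' : GState D n U') : Prop :=
  ∃ γ : U → U',
    Set.BijOn γ (adomF s ∪ Set.range cst ∪ σ '' V)
      (adomF s' ∪ Set.range cst' ∪ σ' '' V) ∧
    IsWitness cst cst' γ s s' ∧
    ∀ x ∈ V, σ' x = γ (σ x)

/-! ### Simulations and bisimulations -/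

section Bisim

variable {D : Schema} {n : ℕ} {sig sig' : Fin (n+1) → AgentSig} {C U U' : Type}
  {Ag : ∀ i, Agent D (sig i) U} {Ag' : ∀ i, Agent D (sig' i) U'}

/-- Simulation between two AC-MAS. -/
def IsSim (cst : C → U) (cst' : C → U')
    (M : ACMAS D sig Ag) (M' : ACMAS D sig' Ag')
    (R : GState D n U → GState D n U' → Prop) : Prop :=
  ∀ s s', R s s' →
    s ∈ M.S ∧ s' ∈ M'.S ∧ Iso cst cst' s s' ∧
    ∀ t, M.Tr s t → ∃ t', M'.Tr s' t' ∧ R t t'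

/-- Bisimulation. -/
def IsBisim (cst : C → U) (cst' : C → U')
    (M : ACMAS D sig Ag) (M' : ACMAS D sig' Ag')
    (R : GState D n U → GState D n U' → Prop) : Prop :=
  IsSim cst cst' M M' R ∧ IsSim cst' cst M' M (fun s' s => R s s')

/-- Bisimilarity of states. -/
def Bisimilar (cst : C → U) (cst' : C → U')
    (M : ACMAS D sig Ag) (M' : ACMAS D sig' Ag')
    (s : GState D n U) (s' : GState D n U') : Prop :=
  ∃ R, IsBisim cst cst' M M' R ∧ R s s'

/-- `P ≈ P'`: the two systems are bisimilar. -/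
def BisimSys (cst : C → U) (cst' : C → U')
    (M : ACMAS D sig Ag) (M' : ACMAS D sig' Ag') : Prop :=
  Bisimilar cst cst' M M' M.s0 M'.s0

/-- ⊕-simulation. -/
def IsOSim (cst : C → U) (cst' : C → U')
    (M : ACMAS D sig Ag) (M' : ACMAS D sig' Ag')
    (R : GState D n U → GState D n U' → Prop) : Prop :=
  ∀ s s', R s s' →
    s ∈ M.S ∧ s' ∈ M'.S ∧ Iso cst cst' s s' ∧
    (∀ t, M.Tr s t → ∃ t', M'.Tr s' t' ∧
        Iso cst cst' (oplusG s t) (oplusG s' t') ∧ R t t') ∧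
    (∀ (t : GState D n U) (i : Fin n), M.Epi i.succ s t →
        ∃ t', M'.Epi i.succ s' t' ∧
          Iso cst cst' (oplusG s t) (oplusG s' t') ∧ R t t')

/-- ⊕-bisimulation. -/
def IsOBisim (cst : C → U) (cst' : C → U')
    (M : ACMAS D sig Ag) (M' : ACMAS D sig' Ag')
    (R : GState D n U → GState D n U' → Prop) : Prop :=
  IsOSim cst cst' M M' R ∧ IsOSim cst' cst M' M (fun s' s => R s s')

/-- ⊕-bisimilarity of states. -/
def OBisimilar (cst : C → U) (cst' : C → U')
    (M : ACMAS D sig Ag) (M' : ACMAS D sig' Ag')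
    (s : GState D n U) (s' : GState D n U') : Prop :=
  ∃ R, IsOBisim cst cst' M M' R ∧ R s s'

/-- The two systems are ⊕-bisimilar. -/
def OBisimSys (cst : C → U) (cst' : C → U')
    (M : ACMAS D sig Ag) (M' : ACMAS D sig' Ag') : Prop :=
  OBisimilar cst cst' M M' M.s0 M'.s0

end Bisim

/-! ### Uniformity and boundedness -/

section Uniform

variable {D : Schema} {n : ℕ} {sig : Fin (n+1) → AgentSig} {C U : Type}
  {Ag : ∀ i, Agent D (sig i) U}

/-- Temporal condition (1) of uniformity. -/
def UniformT (cst : C → U) (M : ACMAS D sig Ag) : Prop :=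
  ∀ s ∈ M.S, ∀ t ∈ M.S, ∀ s' ∈ M.S, ∀ (t' : GState D n U) (a : JAct sig U),
    t ∈ M.τ s a →
    ∀ ι : U → U, IsWitness cst cst ι (oplusG s t) (oplusG s' t') →
    ∀ ι' : U → U,
      (∀ u ∈ adomF (oplusG s t) ∪ Set.range cst, ι' u = ι u) →
      Set.InjOn ι' (adomF (oplusG s t) ∪ Set.range cst ∪ actElems a) →
      (∀ c, ι' (cst c) = cst c) →
      t' ∈ M.τ s' (JAct.map ι' a)

/-- Epistemic condition (2) of uniformity. -/
def UniformE (cst : C → U) (M : ACMAS D sig Ag) : Prop :=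
  ∀ s ∈ M.S, ∀ t ∈ M.S, ∀ s' ∈ M.S, ∀ (t' : GState D n U) (i : Fin n),
    M.Epi i.succ s t → Iso cst cst (oplusG s t) (oplusG s' t') →
    M.Epi i.succ s' t'

/-- Uniform AC-MAS. -/
def Uniform (cst : C → U) (M : ACMAS D sig Ag) : Prop :=
  UniformT cst M ∧ UniformE cst M

/-- `b`-bounded AC-MAS: no reachable state has more than `b` distinct elements
in its active domain. -/
def BBounded (M : ACMAS D sig Ag) (b : ℕ) : Prop :=
  ∀ s ∈ M.S, (adomF s).Finite ∧ (adomF s).ncard ≤ b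

end Uniform

/-- `N_Ag`: the sum over the agents of the maximal number of parameters of
their action types. -/
def NAg {n : ℕ} (sig : Fin (n+1) → AgentSig) : ℕ :=
  ∑ i, Finset.univ.sup (sig i).np

/-! ### Abstractions -/

section Abstraction

variable {D : Schema} {n : ℕ} {sig : Fin (n+1) → AgentSig} {C U U' : Type}
  {Ag : ∀ i, Agent D (sig i) U} {Ag' : ∀ i, Agent D (sig i) U'}

/-- `A'` is the abstract agent corresponding to `A`, over the domain `U'`. -/
def IsAbstractAgent {g : AgentSig} (cst : C → U) (cst' : C → U')
    (A : Agent D g U) (A' : Agent D g U') : Prop :=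
  ∀ (l' : Inst D U') (α' : GAct g U'), α' ∈ A'.Pr l' ↔
    ∃ l ∈ A.L, ∃ α ∈ A.Pr l, ∃ ι : U → U',
      IsWitness cst cst' ι (fun _ : PUnit => l) (fun _ : PUnit => l') ∧
      ∃ ι' : U → U',
        (∀ u ∈ l.adom ∪ Set.range cst, ι' u = ι u) ∧
        Set.InjOn ι' (l.adom ∪ Set.range cst ∪ Set.range α.2) ∧
        α' = α.map ι'

/-- `M'` is an abstraction of `M` (over the abstract agents `Ag'`). -/
def IsAbstraction (cst : C → U) (cst' : C → U')
    (M : ACMAS D sig Ag) (M' : ACMAS D sig Ag') : Prop :=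
  (∀ i, IsAbstractAgent cst cst' (Ag i) (Ag' i)) ∧
  Iso cst' cst M'.s0 M.s0 ∧
  ∀ (s' t' : GState D n U') (a' : JAct sig U'),
    t' ∈ M'.τ s' a' ↔
      ∃ s ∈ M.S, ∃ t ∈ M.S, ∃ a : JAct sig U, t ∈ M.τ s a ∧
        ∃ ι : U → U', IsWitness cst cst' ι s s' ∧ IsWitness cst cst' ι t t' ∧
          ∃ ι' : U → U',
            (∀ u ∈ adomF s ∪ adomF t ∪ Set.range cst, ι' u = ι u) ∧
            Set.InjOn ι' (adomF s ∪ adomF t ∪ Set.range cst ∪ actElems a) ∧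
            a' = JAct.map ι' a

/-- `M'` is a ⊕-abstraction of `M` (over the abstract agents `Ag'`).
The requirement `s0' = s0` is rendered, across the two interpretation
domains, as: the initial states are isomorphic and `adom(s0) ⊆ C`. -/
def IsOAbstraction (cst : C → U) (cst' : C → U')
    (M : ACMAS D sig Ag) (M' : ACMAS D sig Ag') : Prop :=
  (∀ i, IsAbstractAgent cst cst' (Ag i) (Ag' i)) ∧
  (Iso cst cst' M.s0 M'.s0 ∧ adomF M.s0 ⊆ Set.range cst) ∧
  ∀ (s' t' : GState D n U') (a' : JAct sig U'),
    t' ∈ M'.τ s' a' ↔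
      ∃ s ∈ M.S, ∃ t ∈ M.S, ∃ a : JAct sig U, t ∈ M.τ s a ∧
        ∃ ι : U → U',
          IsWitness cst cst' ι (oplusG s t) (oplusG s' t') ∧
          ∃ ι' : U → U',
            (∀ u ∈ adomF (oplusG s t) ∪ Set.range cst, ι' u = ι u) ∧
            Set.InjOn ι' (adomF (oplusG s t) ∪ Set.range cst ∪ actElems a) ∧
            a' = JAct.map ι' a

end Abstraction

/-! ### Temporal-epistemic specification languages -/

/-- Sentence-atomic FO-CTL formulas. -/
inductive SAFOCTL (D : Schema) (C : Type) : Type where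
  | atom : (ψ : FO D C) → ψ.free = ∅ → SAFOCTL D C
  | not : SAFOCTL D C → SAFOCTL D C
  | imp : SAFOCTL D C → SAFOCTL D C → SAFOCTL D C
  | ax : SAFOCTL D C → SAFOCTL D C
  | au : SAFOCTL D C → SAFOCTL D C → SAFOCTL D C
  | eu : SAFOCTL D C → SAFOCTL D C → SAFOCTL D C

/-- Satisfaction of SA-FO-CTL formulas at a global state. -/
def SAFOCTL.sat {D : Schema} {C : Type} {n : ℕ} {sig : Fin (n+1) → AgentSig}
    {U : Type} {Ag : ∀ i, Agent D (sig i) U}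
    (cst : C → U) (M : ACMAS D sig Ag) :
    SAFOCTL D C → GState D n U → Prop
  | .atom ψ _, s => ∀ σ, FO.sat cst (gInst s) σ ψ
  | .not φ, s => ¬ SAFOCTL.sat cst M φ s
  | .imp φ ψ, s => SAFOCTL.sat cst M φ s → SAFOCTL.sat cst M ψ s
  | .ax φ, s => ∀ r, M.IsRun r → r 0 = s → SAFOCTL.sat cst M φ (r 1)
  | .au φ ψ, s => ∀ r, M.IsRun r → r 0 = s →
      ∃ k, SAFOCTL.sat cst M ψ (r k) ∧ ∀ j < k, SAFOCTL.sat cst M φ (r j)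
  | .eu φ ψ, s => ∃ r, M.IsRun r ∧ r 0 = s ∧
      ∃ k, SAFOCTL.sat cst M ψ (r k) ∧ ∀ j < k, SAFOCTL.sat cst M φ (r j)

/-- `P ⊨ φ` for SA-FO-CTL. -/
def SAFOCTL.satM {D : Schema} {C : Type} {n : ℕ} {sig : Fin (n+1) → AgentSig}
    {U : Type} {Ag : ∀ i, Agent D (sig i) U}
    (cst : C → U) (M : ACMAS D sig Ag) (φ : SAFOCTL D C) : Prop :=
  SAFOCTL.sat cst M φ M.s0

/-- FO-CTLK formulas, with epistemic operators for agents `1, …, n` and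
common knowledge. -/
inductive FOCTLK (D : Schema) (C : Type) (n : ℕ) : Type where
  | atom : FO D C → FOCTLK D C n
  | not : FOCTLK D C n → FOCTLK D C n
  | imp : FOCTLK D C n → FOCTLK D C n → FOCTLK D C n
  | all : ℕ → FOCTLK D C n → FOCTLK D C n
  | ax : FOCTLK D C n → FOCTLK D C n
  | au : FOCTLK D C n → FOCTLK D C n → FOCTLK D C n
  | eu : FOCTLK D C n → FOCTLK D C n → FOCTLK D C n
  | know : Fin n → FOCTLK D C n → FOCTLK D C n
  | ck : FOCTLK D C n → FOCTLK D C n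

namespace FOCTLK

variable {D : Schema} {C : Type} {n : ℕ}

def free : FOCTLK D C n → Finset ℕ
  | .atom ψ => ψ.free
  | .not φ => φ.free
  | .imp φ ψ => φ.free ∪ ψ.free
  | .all x φ => φ.free.erase x
  | .ax φ => φ.free
  | .au φ ψ => φ.free ∪ ψ.free
  | .eu φ ψ => φ.free ∪ ψ.free
  | .know _ φ => φ.free
  | .ck φ => φ.free

def vars : FOCTLK D C n → Finset ℕ
  | .atom ψ => ψ.vars
  | .not φ => φ.vars
  | .imp φ ψ => φ.vars ∪ ψ.vars
  | .all x φ => insert x φ.vars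
  | .ax φ => φ.vars
  | .au φ ψ => φ.vars ∪ ψ.vars
  | .eu φ ψ => φ.vars ∪ ψ.vars
  | .know _ φ => φ.vars
  | .ck φ => φ.vars

/-- Satisfaction `(P, s, σ) ⊨ φ` of FO-CTLK formulas. -/
def sat {sig : Fin (n+1) → AgentSig} {U : Type} {Ag : ∀ i, Agent D (sig i) U}
    (cst : C → U) (M : ACMAS D sig Ag) :
    FOCTLK D C n → GState D n U → (ℕ → U) → Prop
  | .atom ψ, s, σ => FO.sat cst (gInst s) σ ψ
  | .not φ, s, σ => ¬ sat cst M φ s σ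
  | .imp φ ψ, s, σ => sat cst M φ s σ → sat cst M ψ s σ
  | .all x φ, s, σ => ∀ u ∈ adomF s, sat cst M φ s (Function.update σ x u)
  | .ax φ, s, σ => ∀ r, M.IsRun r → r 0 = s → sat cst M φ (r 1) σ
  | .au φ ψ, s, σ => ∀ r, M.IsRun r → r 0 = s →
      ∃ k, sat cst M ψ (r k) σ ∧ ∀ j < k, sat cst M φ (r j) σ
  | .eu φ ψ, s, σ => ∃ r, M.IsRun r ∧ r 0 = s ∧
      ∃ k, sat cst M ψ (r k) σ ∧ ∀ j < k, sat cst M φ (r j) σ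
  | .know i φ, s, σ => ∀ t, M.Epi i.succ s t → sat cst M φ t σ
  | .ck φ, s, σ => ∀ t, Relation.TransGen M.EpiAny s t → sat cst M φ t σ

/-- `P ⊨ φ` for FO-CTLK: satisfaction at the initial state under every
assignment. -/
def satM {sig : Fin (n+1) → AgentSig} {U : Type} {Ag : ∀ i, Agent D (sig i) U}
    (cst : C → U) (M : ACMAS D sig Ag) (φ : FOCTLK D C n) : Prop :=
  ∀ σ : ℕ → U, sat cst M φ M.s0 σ

end FOCTLK

/-- FO-ECTLK: the existential fragment. -/
inductive FOECTLK (D : Schema) (C : Type) (n : ℕ) : Type where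
  | atom : FO D C → FOECTLK D C n
  | and : FOECTLK D C n → FOECTLK D C n → FOECTLK D C n
  | or : FOECTLK D C n → FOECTLK D C n → FOECTLK D C n
  | all : ℕ → FOECTLK D C n → FOECTLK D C n
  | ex : ℕ → FOECTLK D C n → FOECTLK D C n
  | enext : FOECTLK D C n → FOECTLK D C n
  | eu : FOECTLK D C n → FOECTLK D C n → FOECTLK D C n
  | dknow : Fin n → FOECTLK D C n → FOECTLK D C n
  | dck : FOECTLK D C n → FOECTLK D C n

/-- Satisfaction of FO-ECTLK formulas. -/
def FOECTLK.sat {D : Schema} {C : Type} {n : ℕ} {sig : Fin (n+1) → AgentSig}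
    {U : Type} {Ag : ∀ i, Agent D (sig i) U}
    (cst : C → U) (M : ACMAS D sig Ag) :
    FOECTLK D C n → GState D n U → (ℕ → U) → Prop
  | .atom ψ, s, σ => FO.sat cst (gInst s) σ ψ
  | .and φ ψ, s, σ => FOECTLK.sat cst M φ s σ ∧ FOECTLK.sat cst M ψ s σ
  | .or φ ψ, s, σ => FOECTLK.sat cst M φ s σ ∨ FOECTLK.sat cst M ψ s σ
  | .all x φ, s, σ => ∀ u ∈ adomF s, FOECTLK.sat cst M φ s (Function.update σ x u)
  | .ex x φ, s, σ => ∃ u ∈ adomF s, FOECTLK.sat cst M φ s (Function.update σ x u)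
  | .enext φ, s, σ => ∃ r, M.IsRun r ∧ r 0 = s ∧ FOECTLK.sat cst M φ (r 1) σ
  | .eu φ ψ, s, σ => ∃ r, M.IsRun r ∧ r 0 = s ∧
      ∃ k, FOECTLK.sat cst M ψ (r k) σ ∧ ∀ j < k, FOECTLK.sat cst M φ (r j) σ
  | .dknow i φ, s, σ => ∃ t, M.Epi i.succ s t ∧ FOECTLK.sat cst M φ t σ
  | .dck φ, s, σ => ∃ t, Relation.TransGen M.EpiAny s t ∧ FOECTLK.sat cst M φ t σ

/-- `P ⊨ φ` for FO-ECTLK. -/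
def FOECTLK.satM {D : Schema} {C : Type} {n : ℕ} {sig : Fin (n+1) → AgentSig}
    {U : Type} {Ag : ∀ i, Agent D (sig i) U}
    (cst : C → U) (M : ACMAS D sig Ag) (φ : FOECTLK D C n) : Prop :=
  ∀ σ : ℕ → U, FOECTLK.sat cst M φ M.s0 σ

/-- `Mb` is the `b`-restriction of `M`. -/
def IsBRestriction {D : Schema} {n : ℕ} {sig : Fin (n+1) → AgentSig} {U : Type}
    {Ag : ∀ i, Agent D (sig i) U} (Mb M : ACMAS D sig Ag) (b : ℕ) : Prop :=
  Mb.s0 = M.s0 ∧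
  Mb.S = { s ∈ M.S | (adomF s).Finite ∧ (adomF s).ncard ≤ b } ∧
  ∀ s a, Mb.τ s a = { t ∈ M.τ s a | s ∈ Mb.S ∧ t ∈ Mb.S }

/-! ### Artifact-centric programs -/

/-- A declarative artifact-centric program. -/
structure ACProgram (D : Schema) (C : Type) {n : ℕ} (sig : Fin (n+1) → AgentSig) where
  /-- local database schemas, as sets of relation symbols -/
  locRel : Fin (n+1) → Set D.Rel
  locDisj : ∀ i j, i ≠ j → Disjoint (locRel i) (locRel j)
  /-- initial local states; their values are constants -/
  l0 : ∀ _ : Fin (n+1), Inst D C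
  l0_loc : ∀ i r, r ∉ locRel i → (l0 i).rel r = ∅
  /-- preconditions: FO-formulas over the local schema whose free variables
  are among the action parameters -/
  pre : ∀ i, (sig i).Act → FO D C
  /-- postconditions: FO-formulas over the global schema and its primed copy -/
  post : ∀ i, (sig i).Act → FO D.double C
  pre_free : ∀ i a, ↑(pre i a).free ⊆ { x : ℕ | x < (sig i).np a }
  post_free : ∀ i a, ↑(post i a).free ⊆ { x : ℕ | x < (sig i).np a }
  pre_loc : ∀ i a, (pre i a).UsesOnly (locRel i)

namespace ACProgram

variable {D : Schema} {C : Type} {n : ℕ} {sig : Fin (n+1) → AgentSig}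

/-- The constants mentioned in the program. -/
def progConsts (P : ACProgram D C sig) : Set C :=
  (⋃ i, (P.l0 i).adom) ∪
  ⋃ i, ⋃ a : (sig i).Act, ((P.pre i a).consts ∪ (P.post i a).consts)

/-- Ground values of the postcondition parameters of a joint ground action. -/
def postElems (P : ACProgram D C sig) {U : Type} (a : JAct sig U) : Set U :=
  { u | ∃ (i : Fin (n+1)) (j : Fin ((sig i).np (a i).1)),
      (j : ℕ) ∈ (P.post i (a i).1).free ∧ (a i).2 j = u }

/-- The agent induced by the program for index `i`. -/
def InducedAgent {U : Type} (cst : C → U) (P : ACProgram D C sig) (i : Fin (n+1))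
    (A : Agent D (sig i) U) : Prop :=
  A.L = { l : Inst D U | ∀ r, r ∉ P.locRel i → l.rel r = ∅ } ∧
  ∀ (l : Inst D U) (α : GAct (sig i) U), α ∈ A.Pr l ↔
    ∀ σ : ℕ → U, (∀ j : Fin ((sig i).np α.1), σ (j : ℕ) = α.2 j) →
      FO.sat cst l σ (P.pre i α.1)

/-- The transitions induced by the program. -/
def InducedTrans {U : Type} (cst : C → U) (P : ACProgram D C sig)
    (s t : GState D n U) (a : JAct sig U) : Prop :=
  (∀ i, ∀ σ : ℕ → U, (∀ j : Fin ((sig i).np (a i).1), σ (j : ℕ) = (a i).2 j) →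
      FO.sat cst (s i) σ (P.pre i (a i).1)) ∧
  adomF t ⊆ adomF s ∪ P.postElems a ∪ cst '' (⋃ i, (P.post i (a i).1).consts) ∧
  (∀ i, ∀ σ : ℕ → U, (∀ j : Fin ((sig i).np (a i).1), σ (j : ℕ) = (a i).2 j) →
      FO.sat cst ((gInst s).oplus (gInst t)) σ (P.post i (a i).1))

/-- `M` is the AC-MAS induced by the program `P` (the transition relation is
assumed to be serial). -/
def InducedACMAS {U : Type} (cst : C → U) (P : ACProgram D C sig)
    (Ag : ∀ i, Agent D (sig i) U) (M : ACMAS D sig Ag) : Prop :=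
  (∀ i, P.InducedAgent cst i (Ag i)) ∧
  M.s0 = (fun i => (P.l0 i).map cst) ∧
  (∀ s t a, t ∈ M.τ s a ↔ P.InducedTrans cst s t a) ∧
  M.Std

end ACProgram

/-! ### Images of instances and states -/

section Image

variable {D : Schema} {U U' U'' : Type} {n : ℕ}

theorem Inst.eq_of_rel {I J : Inst D U} (h : ∀ r, I.rel r = J.rel r) : I = J := by
  cases I
  cases J
  congr
  exact funext h

theorem Inst.map_congr {f g : U → U'} {I : Inst D U} (h : EqOn f g I.adom) :
    I.map f = I.map g :=
  Inst.eq_of_rel fun r => image_congr fun t ht =>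
    funext fun j => h ⟨r, t, ht, j, rfl⟩

theorem Inst.map_map (f : U → U') (g : U' → U'') (I : Inst D U) :
    (I.map f).map g = I.map (g ∘ f) :=
  Inst.eq_of_rel fun r => by
    simp only [Inst.map, image_image]
    rfl

theorem Inst.map_id (I : Inst D U) : I.map id = I :=
  Inst.eq_of_rel fun r => by simp [Inst.map]

theorem Inst.adom_map (f : U → U') (I : Inst D U) : (I.map f).adom = f '' I.adom := by
  ext u
  constructor
  · rintro ⟨r, _, ⟨t, ht, rfl⟩, j, rfl⟩
    exact ⟨t j, ⟨r, t, ht, j, rfl⟩, rfl⟩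
  · rintro ⟨_, ⟨r, t, ht, j, rfl⟩, rfl⟩
    exact ⟨r, f ∘ t, ⟨t, ht, rfl⟩, j, rfl⟩

/-- Componentwise image of a family of instances. -/
def mapF {X : Type} (f : U → U') (s : X → Inst D U) : X → Inst D U' :=
  fun i => (s i).map f

variable {X : Type}

theorem mapF_congr {f g : U → U'} {s : X → Inst D U} (h : EqOn f g (adomF s)) :
    mapF f s = mapF g s :=
  funext fun i => Inst.map_congr (h.mono (subset_iUnion (fun i => (s i).adom) i))

theorem mapF_mapF (f : U → U') (g : U' → U'') (s : X → Inst D U) :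
    mapF g (mapF f s) = mapF (g ∘ f) s :=
  funext fun i => Inst.map_map f g (s i)

theorem mapF_id (s : X → Inst D U) : mapF id s = s :=
  funext fun i => Inst.map_id (s i)

theorem adomF_mapF (f : U → U') (s : X → Inst D U) : adomF (mapF f s) = f '' adomF s := by
  simp only [adomF, mapF, Inst.adom_map, image_iUnion]

theorem Inst.mem_adomF {s : X → Inst D U} {i : X} {r : D.Rel} {t : Fin (D.arity r) → U}
    (ht : t ∈ (s i).rel r) (j : Fin (D.arity r)) : t j ∈ adomF s :=
  mem_iUnion.2 ⟨i, r, t, ht, j, rfl⟩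

theorem Inst.map_oplus (f : U → U') (I J : Inst D U) :
    (I.oplus J).map f = (I.map f).oplus (J.map f) :=
  Inst.eq_of_rel fun r => by cases r <;> rfl

theorem oplusG_mapF (f : U → U') (s t : GState D n U) :
    oplusG (mapF f s) (mapF f t) = mapF f (oplusG s t) :=
  funext fun i => (Inst.map_oplus f (s i) (t i)).symm

theorem Inst.oplus_injective {I J I' J' : Inst D U} (h : I.oplus J = I'.oplus J') :
    I = I' ∧ J = J' :=
  ⟨Inst.eq_of_rel fun r => congrFun (congrArg Inst.rel h) (.inl r),
    Inst.eq_of_rel fun r => congrFun (congrArg Inst.rel h) (.inr r)⟩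

theorem oplusG_injective {s t s' t' : GState D n U} (h : oplusG s t = oplusG s' t') :
    s = s' ∧ t = t' :=
  ⟨funext fun i => (Inst.oplus_injective (congrFun h i)).1,
    funext fun i => (Inst.oplus_injective (congrFun h i)).2⟩

theorem Inst.adom_oplus (I J : Inst D U) : (I.oplus J).adom = I.adom ∪ J.adom := by
  ext u
  constructor
  · rintro ⟨r | r, t, ht, j, rfl⟩
    · exact Or.inl ⟨r, t, ht, j, rfl⟩
    · exact Or.inr ⟨r, t, ht, j, rfl⟩
  · rintro (⟨r, t, ht, j, rfl⟩ | ⟨r, t, ht, j, rfl⟩)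
    · exact ⟨.inl r, t, ht, j, rfl⟩
    · exact ⟨.inr r, t, ht, j, rfl⟩

theorem adomF_oplusG (s t : GState D n U) : adomF (oplusG s t) = adomF s ∪ adomF t := by
  simp only [adomF, oplusG, Inst.adom_oplus, iUnion_union_distrib]

variable {C : Type} {cst : C → U} {cst' : C → U'} {s : X → Inst D U} {s' : X → Inst D U'}
  {ι : U → U'}

theorem IsWitness.eq_mapF (h : IsWitness cst cst' ι s s') : s' = mapF ι s := by
  obtain ⟨hbij, -, hrel⟩ := h
  refine funext fun i => Inst.eq_of_rel fun r => Subset.antisymm ?_ ?_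
  · intro t' ht'
    choose t ht htt using fun j => hbij.surjOn (Or.inl (Inst.mem_adomF ht' j))
    have hcomp : (fun j => ι (t j)) = t' := funext htt
    exact ⟨t, (hrel i r t ht).2 (hcomp ▸ ht'), hcomp⟩
  · rintro _ ⟨t, ht, rfl⟩
    exact (hrel i r t fun j => Or.inl (Inst.mem_adomF ht j)).1 ht

theorem isWitness_mapF (hinj : InjOn ι (adomF s ∪ range cst)) (hc : ∀ c, ι (cst c) = cst' c) :
    IsWitness cst cst' ι s (mapF ι s) := by
  refine ⟨?_, hc, fun i r t ht => ⟨fun h => ⟨t, h, rfl⟩, ?_⟩⟩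
  · have himage : adomF (mapF ι s) ∪ range cst' = ι '' (adomF s ∪ range cst) := by
      rw [adomF_mapF, image_union, ← range_comp]
      congr 2
      exact (funext hc).symm
    rw [himage]
    exact hinj.bijOn_image
  · rintro ⟨t', ht', heq⟩
    have : t' = t := funext fun j =>
      hinj (Or.inl (Inst.mem_adomF ht' j)) (ht j) (congrFun heq j)
    exact this ▸ ht'

end Image

section Actions

variable {n : ℕ} {sig : Fin (n + 1) → AgentSig} {U U' U'' : Type}

theorem JAct.map_map (f : U → U') (g : U' → U'') (a : JAct sig U) :
    (a.map f).map g = a.map (g ∘ f) := rfl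

theorem actElems_map (f : U → U') (a : JAct sig U) : actElems (a.map f) = f '' actElems a := by
  ext u
  constructor
  · rintro ⟨i, j, rfl⟩
    exact ⟨_, ⟨i, j, rfl⟩, rfl⟩
  · rintro ⟨_, ⟨i, j, rfl⟩, rfl⟩
    exact ⟨i, j, rfl⟩

theorem actElems_eq_range (a : JAct sig U) :
    actElems a = range fun p : Σ i, Fin ((sig i).np (a i).1) => (a p.1).2 p.2 := by
  ext u
  simp [actElems]

theorem finite_actElems (a : JAct sig U) : (actElems a).Finite :=
  actElems_eq_range a ▸ finite_range _

theorem ncard_range_le {α β : Type*} [Finite α] (f : α → β) : (range f).ncard ≤ Nat.card α := by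
  rw [← image_univ, ← ncard_univ]
  exact ncard_image_le

theorem ncard_actElems_le (a : JAct sig U) : (actElems a).ncard ≤ NAg sig := by
  rw [actElems_eq_range]
  refine (ncard_range_le _).trans ?_
  rw [Nat.card_eq_fintype_card, Fintype.card_sigma]
  simp only [Fintype.card_fin]
  exact Finset.sum_le_sum fun i _ => Finset.le_sup (f := (sig i).np) (Finset.mem_univ _)

end Actions

/-- An injection on a finite set extends to a finite superset when the codomain is large enough. -/
theorem exists_injOn_extension {U U' : Type} {f : U → U'} {A B : Set U} (hf : InjOn f A)
    (hA : A.Finite) (hB : B.Finite) (hcard : ((A ∪ B).ncard : Cardinal) ≤ Cardinal.mk U') :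
    ∃ g : U → U', EqOn g f A ∧ InjOn g (A ∪ B) := by
  classical
  induction B, hB using Set.Finite.induction_on with
  | empty => exact ⟨f, fun _ _ => rfl, by simpa using hf⟩
  | @insert x B hx hB ih =>
    have hle : (A ∪ B).ncard ≤ (A ∪ insert x B).ncard :=
      ncard_le_ncard (union_subset_union_right _ (subset_insert _ _)) (hA.union (hB.insert x))
    obtain ⟨g, hgf, hg⟩ := ih (le_trans (by exact_mod_cast hle) hcard)
    by_cases hmem : x ∈ A ∪ B
    · exact ⟨g, hgf, by rwa [union_insert, insert_eq_of_mem hmem]⟩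
    obtain ⟨u, hu⟩ : ∃ u, u ∉ g '' (A ∪ B) := by
      by_contra! hall
      have huniv : g '' (A ∪ B) = univ := eq_univ_of_forall hall
      have hfin : (g '' (A ∪ B)).Finite := (hA.union hB).image g
      have : Finite U' := finite_univ_iff.1 (huniv ▸ hfin)
      rw [union_insert, ncard_insert_of_notMem hmem (hA.union hB), ← Nat.cast_card,
        Nat.cast_le, ← ncard_univ, ← huniv, hg.ncard_image] at hcard
      omega
    have hne : ∀ y ∈ A ∪ B, y ≠ x := fun y hy h => hmem (h ▸ hy)
    have hup : EqOn (Function.update g x u) g (A ∪ B) := fun y hy =>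
      Function.update_of_ne (hne y hy) _ _
    refine ⟨Function.update g x u, fun y hy => (hup (Or.inl hy)).trans (hgf hy), ?_⟩
    rw [union_insert, injOn_insert hmem]
    exact ⟨hg.congr hup.symm, by rwa [Function.update_self, hup.image_eq]⟩

/-- A relation that simulates single steps lifts to infinite sequences. -/
theorem exists_seq_of_step {X Y : Type*} {Q : X → X → Prop} {Q' : Y → Y → Prop}
    {R : X → Y → Prop} (step : ∀ x y x', R x y → Q x x' → ∃ y', Q' y y' ∧ R x' y')
    {r : ℕ → X} (hr : ∀ k, Q (r k) (r (k + 1))) {y : Y} (h : R (r 0) y) :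
    ∃ r' : ℕ → Y, r' 0 = y ∧ (∀ k, Q' (r' k) (r' (k + 1))) ∧ ∀ k, R (r k) (r' k) := by
  choose next hnext using fun k (p : { y // R (r k) y }) => step _ _ _ p.2 (hr k)
  let g : ∀ k, { y // R (r k) y } :=
    fun k => Nat.rec ⟨y, h⟩ (fun k p => ⟨next k p, (hnext k p).2⟩) k
  exact ⟨fun k => (g k).1, rfl, fun k => (hnext k (g k)).1, fun k => (g k).2⟩

/-! ### Transfer of transitions between systems -/

section Transfer

variable {D : Schema} {C : Type} {n : ℕ} {sig : Fin (n + 1) → AgentSig} {U U' : Type}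
  {cst : C → U} {cst' : C → U'} {Ag : ∀ i, Agent D (sig i) U} {Ag' : ∀ i, Agent D (sig i) U'}
  {M : ACMAS D sig Ag} {M' : ACMAS D sig Ag'} {b : ℕ} {V : Finset ℕ}

/-- Transitions of `M` are mapped to transitions of `M'` by constant-preserving injections. -/
def Transfers (cst : C → U) (cst' : C → U') (M : ACMAS D sig Ag) (M' : ACMAS D sig Ag') : Prop :=
  ∀ s ∈ M.S, ∀ t ∈ M.S, ∀ a, t ∈ M.τ s a → ∀ f : U → U',
    InjOn f (adomF s ∪ adomF t ∪ range cst ∪ actElems a) → (∀ c, f (cst c) = cst' c) →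
    mapF f s ∈ M'.S → mapF f t ∈ M'.τ (mapF f s) (a.map f)

theorem isWitness_oplusG {f : U → U'} {s t : GState D n U}
    (hf : InjOn f (adomF s ∪ adomF t ∪ range cst)) (hc : ∀ c, f (cst c) = cst' c) :
    IsWitness cst cst' f (oplusG s t) (oplusG (mapF f s) (mapF f t)) := by
  rw [oplusG_mapF]
  exact isWitness_mapF (by rwa [adomF_oplusG]) hc

theorem UniformT.transfers (h : UniformT cst M) : Transfers cst cst M M := by
  intro s hs t ht a hta f hf hc hs'
  exact h s hs t ht _ hs' _ a hta f (isWitness_oplusG (hf.mono subset_union_left) hc) f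
    (fun _ _ => rfl) (by rwa [adomF_oplusG]) hc

theorem IsOAbstraction.transfers (h : IsOAbstraction cst cst' M M') :
    Transfers cst cst' M M' := by
  intro s hs t ht a hta f hf hc _
  exact (h.2.2 _ _ _).2 ⟨s, hs, t, ht, a, hta, f,
    isWitness_oplusG (hf.mono subset_union_left) hc, f, fun _ _ => rfl,
    by rwa [adomF_oplusG], rfl⟩

theorem IsOAbstraction.exists_of_tau (h : IsOAbstraction cst cst' M M') {s' t' : GState D n U'}
    {a' : JAct sig U'} (hta : t' ∈ M'.τ s' a') :
    ∃ s ∈ M.S, ∃ t ∈ M.S, ∃ a, t ∈ M.τ s a ∧ ∃ f : U → U',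
      InjOn f (adomF s ∪ adomF t ∪ range cst ∪ actElems a) ∧ (∀ c, f (cst c) = cst' c) ∧
      s' = mapF f s ∧ t' = mapF f t ∧ a' = a.map f := by
  obtain ⟨s, hs, t, ht, a, hst, ι, hι, f, hfι, hf, rfl⟩ := (h.2.2 _ _ _).1 hta
  have heq := hι.eq_mapF
  rw [← mapF_congr (f := f) fun u hu => hfι u (Or.inl hu), ← oplusG_mapF] at heq
  obtain ⟨rfl, rfl⟩ := oplusG_injective heq
  rw [adomF_oplusG] at hf
  exact ⟨s, hs, t, ht, a, hst, f, hf,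
    fun c => (hfι _ (Or.inr (mem_range_self c))).trans (hι.2.1 c), rfl, rfl, rfl⟩

theorem image_range_cst {f : U → U'} (hc : ∀ c, f (cst c) = cst' c) :
    f '' range cst = range cst' := by
  rw [← range_comp]
  exact congrArg range (funext hc)

theorem IsOAbstraction.transfers_symm (h : IsOAbstraction cst cst' M M')
    (hu : UniformT cst M) : Transfers cst' cst M' M := by
  intro s' _ t' _ a' hta g hg hc hs'
  obtain ⟨s, hs, t, ht, a, hst, f, hf, hfc, rfl, rfl, rfl⟩ := h.exists_of_tau hta
  rw [mapF_mapF] at hs' ⊢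
  rw [mapF_mapF, JAct.map_map]
  rw [adomF_mapF, adomF_mapF, actElems_map, ← image_range_cst hfc, ← image_union,
    ← image_union, ← image_union] at hg
  exact hu.transfers s hs t ht a hst (g ∘ f) (hg.comp hf (mapsTo_image _ _))
    (fun c => by rw [Function.comp_apply, hfc, hc]) hs'

theorem IsOAbstraction.exists_state (h : IsOAbstraction cst cst' M M') (hM' : M'.Std)
    {s' : GState D n U'} (hs' : s' ∈ M'.S) :
    ∃ s ∈ M.S, ∃ f : U → U', s' = mapF f s := by
  rw [hM'.2] at hs'
  rcases Relation.ReflTransGen.cases_tail hs' with rfl | ⟨_, -, a, hta⟩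
  · obtain ⟨ι, hι⟩ := h.2.1.1
    exact ⟨M.s0, M.s0_mem, ι, hι.eq_mapF⟩
  · obtain ⟨-, -, t, ht, -, -, f, -, -, -, rfl, -⟩ := h.exists_of_tau hta
    exact ⟨t, ht, f, rfl⟩

theorem IsOAbstraction.bBounded (h : IsOAbstraction cst cst' M M') (hM' : M'.Std)
    (hb : BBounded M b) : BBounded M' b := by
  intro s' hs'
  obtain ⟨s, hs, f, rfl⟩ := h.exists_state hM' hs'
  rw [adomF_mapF]
  exact ⟨(hb s hs).1.image f, (ncard_image_le (hb s hs).1).trans (hb s hs).2⟩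

/-- Isomorphic states together with equivalent assignments on `V`. -/
def Corr (cst : C → U) (cst' : C → U') (M : ACMAS D sig Ag) (M' : ACMAS D sig Ag')
    (V : Finset ℕ) (σ : ℕ → U) (σ' : ℕ → U') (s : GState D n U) (s' : GState D n U') : Prop :=
  s ∈ M.S ∧ s' ∈ M'.S ∧ ∃ γ : U → U', InjOn γ (adomF s ∪ range cst ∪ σ '' V) ∧
    (∀ c, γ (cst c) = cst' c) ∧ s' = mapF γ s ∧ ∀ x ∈ V, σ' x = γ (σ x)

variable {σ : ℕ → U} {σ' : ℕ → U'} {s : GState D n U} {s' : GState D n U'}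

theorem Corr.symm (h : Corr cst cst' M M' V σ σ' s s') : Corr cst' cst M' M V σ' σ s' s := by
  obtain ⟨hs, hs', γ, hγ, hc, rfl, hσ⟩ := h
  have : Nonempty U := ⟨σ 0⟩
  set A := adomF s ∪ range cst ∪ σ '' V with hA
  have hinv : LeftInvOn (Function.invFunOn γ A) γ A := hγ.leftInvOn_invFunOn
  have himage : adomF (mapF γ s) ∪ range cst' ∪ σ' '' V = γ '' A := by
    rw [hA, image_union, image_union, adomF_mapF, image_range_cst hc, image_image,
      image_congr hσ]
  refine ⟨hs', hs, Function.invFunOn γ A, ?_, fun c => ?_, ?_, fun x hx => ?_⟩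
  · rw [himage]
    rintro _ ⟨x, hx, rfl⟩ _ ⟨y, hy, rfl⟩ hxy
    rw [hinv hx, hinv hy] at hxy
    rw [hxy]
  · rw [← hc]
    exact hinv (Or.inl (Or.inr (mem_range_self c)))
  · rw [mapF_mapF]
    exact ((mapF_congr fun u hu => hinv (Or.inl (Or.inl hu))).trans (mapF_id s)).symm
  · rw [hσ x hx]
    exact (hinv (Or.inr (mem_image_of_mem _ hx))).symm

theorem Corr.exists_update (hR : Corr cst cst' M M' V σ σ' s s') {x : ℕ} (hx : x ∈ V) {u : U}
    (hu : u ∈ adomF s) : ∃ u' ∈ adomF s',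
      Corr cst cst' M M' V (Function.update σ x u) (Function.update σ' x u') s s' := by
  obtain ⟨hs, hs', γ, hγ, hc, rfl, hσ⟩ := hR
  refine ⟨γ u, adomF_mapF γ s ▸ mem_image_of_mem γ hu, hs, hs', γ, hγ.mono ?_, hc, rfl, ?_⟩
  · refine union_subset subset_union_left ?_
    rintro _ ⟨y, hy, rfl⟩
    rcases eq_or_ne y x with rfl | hne
    · exact Or.inl (Or.inl (by rwa [Function.update_self]))
    · exact Or.inr ⟨y, hy, (Function.update_of_ne hne _ _).symm⟩
  · intro y hy
    rcases eq_or_ne y x with rfl | hne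
    · simp only [Function.update_self]
    · simp only [Function.update_of_ne hne, hσ y hy]

theorem adom_gInst (s : GState D n U) : (gInst s).adom = adomF s := by
  ext u
  simp only [Inst.adom, gInst, adomF, mem_iUnion, mem_ofPred_eq]
  constructor
  · rintro ⟨r, t, ⟨i, ht⟩, j, rfl⟩
    exact ⟨i, r, t, ht, j, rfl⟩
  · rintro ⟨i, r, t, ht, j, rfl⟩
    exact ⟨r, t, ⟨i, ht⟩, j, rfl⟩

theorem Term.val_mem (σ : ℕ → U) {t : Term C} (ht : t.varsF ⊆ V) :
    t.val cst σ ∈ range cst ∪ σ '' V := by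
  cases t with
  | inl x => exact Or.inr ⟨x, ht (Finset.mem_singleton_self x), rfl⟩
  | inr c => exact Or.inl (mem_range_self c)

theorem Term.val_map {γ : U → U'} (hc : ∀ c, γ (cst c) = cst' c) (hσ : ∀ x ∈ V, σ' x = γ (σ x))
    {t : Term C} (ht : t.varsF ⊆ V) : t.val cst' σ' = γ (t.val cst σ) := by
  cases t with
  | inl x => exact hσ x (ht (Finset.mem_singleton_self x))
  | inr c => exact (hc c).symm

theorem Corr.foSat_iff {ψ : FO D C} (hψ : ψ.vars ⊆ V) (hR : Corr cst cst' M M' V σ σ' s s') :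
    FO.sat cst (gInst s) σ ψ ↔ FO.sat cst' (gInst s') σ' ψ := by
  induction ψ generalizing σ σ' with
  | eq t₁ t₂ =>
    obtain ⟨-, -, γ, hγ, hc, rfl, hσ⟩ := hR
    have h₁ := Finset.union_subset_left hψ
    have h₂ := Finset.union_subset_right hψ
    simp only [FO.sat]
    rw [Term.val_map hc hσ h₁, Term.val_map hc hσ h₂]
    rw [union_assoc] at hγ
    exact (hγ.eq_iff (Or.inr (Term.val_mem σ h₁)) (Or.inr (Term.val_mem σ h₂))).symm
  | rel r ts =>
    obtain ⟨-, -, γ, hγ, hc, rfl, hσ⟩ := hR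
    have hts : ∀ j, (ts j).varsF ⊆ V := fun j =>
      (Finset.subset_biUnion_of_mem (fun j => (ts j).varsF) (Finset.mem_univ j)).trans hψ
    simp only [FO.sat, gInst, mem_iUnion]
    rw [union_assoc] at hγ
    refine exists_congr fun i => ⟨fun h => ⟨_, h, funext fun j => ?_⟩, ?_⟩
    · exact (Term.val_map hc hσ (hts j)).symm
    · rintro ⟨t, ht, heq⟩
      have : t = fun j => (ts j).val cst σ := funext fun j =>
        hγ (Or.inl (Inst.mem_adomF ht j)) (Or.inr (Term.val_mem σ (hts j)))
          ((congrFun heq j).trans (Term.val_map hc hσ (hts j)))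
      exact this ▸ ht
  | not ψ ih => exact not_congr (ih hψ hR)
  | imp ψ χ ih₁ ih₂ =>
    exact imp_congr (ih₁ (Finset.union_subset_left hψ) hR) (ih₂ (Finset.union_subset_right hψ) hR)
  | all x ψ ih =>
    obtain ⟨hx, hψ⟩ := Finset.insert_subset_iff.1 hψ
    simp only [FO.sat, adom_gInst]
    constructor
    · intro h u' hu'
      obtain ⟨u, hu, hRu⟩ := hR.symm.exists_update hx hu'
      exact (ih hψ hRu.symm).1 (h u hu)
    · intro h u hu
      obtain ⟨u', hu', hRu⟩ := hR.exists_update hx hu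
      exact (ih hψ hRu).2 (h u' hu')

/-- The one-sided hypotheses under which `M` is simulated by `M'` up to isomorphism, uniformly in
the assignments of the variables in `V`. -/
structure Linked (cst : C → U) (cst' : C → U') (M : ACMAS D sig Ag)
    (M' : ACMAS D sig Ag') (b : ℕ) (V : Finset ℕ) : Prop where
  reach : M.S = { s | Relation.ReflTransGen M.Tr M.s0 s }
  bounded : BBounded M b
  large : ((2 * b + Nat.card C + max V.card (NAg sig) : ℕ) : Cardinal) ≤ Cardinal.mk U'
  map_init : ∀ f : U → U', (∀ c, f (cst c) = cst' c) → mapF f M.s0 = M'.s0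
  transfers : Transfers cst cst' M M'

variable [Finite C]

theorem Linked.exists_extension (h : Linked cst cst' M M' b V) {s t : GState D n U}
    (hs : s ∈ M.S) (ht : t ∈ M.S) {A E : Set U} (hA : A ⊆ adomF s ∪ adomF t ∪ range cst ∪ E)
    (hE : E.Finite) (hEc : E.ncard ≤ max V.card (NAg sig)) {f : U → U'} (hf : InjOn f A) :
    ∃ g : U → U', EqOn g f A ∧ InjOn g (adomF s ∪ adomF t ∪ range cst ∪ E) := by
  have hfin : (adomF s ∪ adomF t ∪ range cst ∪ E).Finite :=
    (((h.bounded s hs).1.union (h.bounded t ht).1).union (finite_range cst)).union hE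
  have hcard : (adomF s ∪ adomF t ∪ range cst ∪ E).ncard ≤
      2 * b + Nat.card C + max V.card (NAg sig) := by
    have h1 := ncard_union_le (adomF s ∪ adomF t ∪ range cst) E
    have h2 := ncard_union_le (adomF s ∪ adomF t) (range cst)
    have h3 := ncard_union_le (adomF s) (adomF t)
    have h4 := ncard_range_le cst
    have h5 := (h.bounded s hs).2
    have h6 := (h.bounded t ht).2
    omega
  have hunion := union_eq_right.2 hA
  obtain ⟨g, hg, hinj⟩ := exists_injOn_extension hf (hfin.subset hA) hfin
    (hunion.symm ▸ le_trans (by exact_mod_cast hcard) h.large)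
  exact ⟨g, hg, hunion ▸ hinj⟩

/-- Transitions are transferred along injections not defined on the action parameters. -/
theorem Linked.exists_tau (h : Linked cst cst' M M' b V) {s t : GState D n U} (hs : s ∈ M.S)
    (ht : t ∈ M.S) {A : Set U} {f : U → U'} (hA : A ⊆ adomF s ∪ adomF t ∪ range cst)
    (hf : InjOn f A) (hCA : range cst ⊆ A) (hc : ∀ c, f (cst c) = cst' c) (hst : M.Tr s t) :
    ∃ g : U → U', EqOn g f A ∧ InjOn g (adomF s ∪ adomF t ∪ range cst) ∧
      (∀ c, g (cst c) = cst' c) ∧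
      (mapF g s ∈ M'.S → M'.Tr (mapF g s) (mapF g t)) := by
  obtain ⟨a, ha⟩ := hst
  obtain ⟨g, hgf, hg⟩ := h.exists_extension hs ht (hA.trans subset_union_left)
    (finite_actElems a) ((ncard_actElems_le a).trans (le_max_right _ _)) hf
  have hgc : ∀ c, g (cst c) = cst' c := fun c => (hgf (hCA (mem_range_self c))).trans (hc c)
  exact ⟨g, hgf, hg.mono subset_union_left, hgc,
    fun hgs => ⟨_, h.transfers s hs t ht a ha g hg hgc hgs⟩⟩

/-- Isomorphic copies of states of `M` are states of `M'`. -/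
theorem Linked.mapF_mem (h : Linked cst cst' M M' b V) {s : GState D n U} (hs : s ∈ M.S)
    {f : U → U'} (hf : InjOn f (adomF s ∪ range cst)) (hc : ∀ c, f (cst c) = cst' c) :
    mapF f s ∈ M'.S := by
  have hr : Relation.ReflTransGen M.Tr M.s0 s := h.reach.subset hs
  clear hs
  induction hr generalizing f with
  | refl => exact h.map_init f hc ▸ M'.s0_mem
  | @tail s t hs hst ih =>
    have hsS : s ∈ M.S := h.reach.superset hs
    have htS : t ∈ M.S := h.reach.superset (hs.tail hst)
    obtain ⟨g, hgf, hg, hgc, htr⟩ := h.exists_tau hsS htS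
      (union_subset_union_left _ subset_union_right) hf subset_union_right hc hst
    have hgs := ih (hg.mono (union_subset_union_left _ subset_union_left)) hgc
    obtain ⟨a, ha⟩ := htr hgs
    rw [← mapF_congr (hgf.mono subset_union_left)]
    exact M'.tau_closed _ hgs a ha

theorem Corr.exists_extension (h : Linked cst cst' M M' b V)
    (hR : Corr cst cst' M M' V σ σ' s s') {t : GState D n U} (ht : t ∈ M.S) :
    ∃ g : U → U', InjOn g (adomF s ∪ adomF t ∪ range cst) ∧ (∀ c, g (cst c) = cst' c) ∧
      s' = mapF g s ∧ Corr cst cst' M M' V σ σ' t (mapF g t) := by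
  obtain ⟨hs, hs', γ, hγ, hc, rfl, hσ⟩ := hR
  obtain ⟨g, hgγ, hg⟩ := h.exists_extension (E := σ '' V) hs ht
    (union_subset_union_left _ (union_subset_union_left _ subset_union_left))
    (V.finite_toSet.image σ)
    ((ncard_image_le V.finite_toSet).trans ((ncard_coe_finset V).le.trans (le_max_left _ _))) hγ
  have hgc : ∀ c, g (cst c) = cst' c := fun c =>
    (hgγ (Or.inl (Or.inr (mem_range_self c)))).trans (hc c)
  have hgt : InjOn g (adomF t ∪ range cst ∪ σ '' V) :=
    hg.mono (union_subset_union_left _ (union_subset_union_left _ subset_union_right))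
  exact ⟨g, hg.mono subset_union_left, hgc,
    (mapF_congr fun u hu => hgγ (Or.inl (Or.inl hu))).symm, ht,
    h.mapF_mem ht (hgt.mono subset_union_left) hgc, g, hgt, hgc, rfl,
    fun x hx => (hσ x hx).trans (hgγ (Or.inr (mem_image_of_mem _ hx))).symm⟩

theorem Corr.exists_tr (h : Linked cst cst' M M' b V)
    (hR : Corr cst cst' M M' V σ σ' s s') {t : GState D n U} (hst : M.Tr s t) :
    ∃ t', M'.Tr s' t' ∧ Corr cst cst' M M' V σ σ' t t' := by
  have ht : t ∈ M.S := hst.elim fun a ha => M.tau_closed s hR.1 a ha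
  obtain ⟨g, hg, hgc, rfl, hRt⟩ := hR.exists_extension h ht
  obtain ⟨k, hkg, -, -, htr⟩ := h.exists_tau hR.1 ht Subset.rfl hg subset_union_right hgc hst
  rw [mapF_congr (f := k) fun u hu => hkg (Or.inl (Or.inl hu)),
    mapF_congr (f := k) fun u hu => hkg (Or.inl (Or.inr hu))] at htr
  exact ⟨_, htr hR.2.1, hRt⟩

theorem Corr.exists_epi (h : Linked cst cst' M M' b V)
    (hR : Corr cst cst' M M' V σ σ' s s') {t : GState D n U} {i : Fin (n + 1)}
    (hst : M.Epi i s t) : ∃ t', M'.Epi i s' t' ∧ Corr cst cst' M M' V σ σ' t t' := by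
  obtain ⟨g, -, -, rfl, hRt⟩ := hR.exists_extension h hst.2.1
  exact ⟨_, ⟨hR.2.1, hRt.2.1, congrArg (Inst.map g) hst.2.2⟩, hRt⟩

theorem Corr.exists_transGen (h : Linked cst cst' M M' b V)
    (hR : Corr cst cst' M M' V σ σ' s s') {t : GState D n U}
    (hst : Relation.TransGen M.EpiAny s t) :
    ∃ t', Relation.TransGen M'.EpiAny s' t' ∧ Corr cst cst' M M' V σ σ' t t' := by
  induction hst with
  | single hst =>
    obtain ⟨i, hi⟩ := hst
    obtain ⟨t', ht', hRt⟩ := hR.exists_epi h hi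
    exact ⟨t', .single ⟨i, ht'⟩, hRt⟩
  | tail _ hst ih =>
    obtain ⟨t', ht', hRt⟩ := ih
    obtain ⟨i, hi⟩ := hst
    obtain ⟨u', hu', hRu⟩ := hRt.exists_epi h hi
    exact ⟨u', ht'.tail ⟨i, hu'⟩, hRu⟩

theorem Corr.exists_run (h : Linked cst cst' M M' b V)
    (hR : Corr cst cst' M M' V σ σ' s s') {r : ℕ → GState D n U} (hr : M.IsRun r)
    (h0 : r 0 = s) :
    ∃ r', M'.IsRun r' ∧ r' 0 = s' ∧ ∀ k, Corr cst cst' M M' V σ σ' (r k) (r' k) := by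
  subst h0
  obtain ⟨r', h0', hr', hRr⟩ := exists_seq_of_step (Q := M.Tr) (Q' := M'.Tr)
    (R := Corr cst cst' M M' V σ σ') (fun _ _ _ hxy hxx => hxy.exists_tr h hxx) hr.2 hR
  exact ⟨r', ⟨fun k => (hRr k).2.1, hr'⟩, h0', hRr⟩

theorem Corr.sat_iff (h : Linked cst cst' M M' b V) (h' : Linked cst' cst M' M b V)
    {φ : FOCTLK D C n} (hφ : φ.vars ⊆ V) (hR : Corr cst cst' M M' V σ σ' s s') :
    FOCTLK.sat cst M φ s σ ↔ FOCTLK.sat cst' M' φ s' σ' := by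
  induction φ generalizing σ σ' s s' with
  | atom ψ => exact hR.foSat_iff hφ
  | not φ ih => exact not_congr (ih hφ hR)
  | imp φ ψ ih₁ ih₂ =>
    exact imp_congr (ih₁ (Finset.union_subset_left hφ) hR) (ih₂ (Finset.union_subset_right hφ) hR)
  | all x φ ih =>
    obtain ⟨hx, hφ⟩ := Finset.insert_subset_iff.1 hφ
    constructor
    · intro hsat u' hu'
      obtain ⟨u, hu, hRu⟩ := hR.symm.exists_update hx hu'
      exact (ih hφ hRu.symm).1 (hsat u hu)
    · intro hsat u hu
      obtain ⟨u', hu', hRu⟩ := hR.exists_update hx hu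
      exact (ih hφ hRu).2 (hsat u' hu')
  | ax φ ih =>
    constructor
    · intro hsat r' hr' h0'
      obtain ⟨r, hr, h0, hRr⟩ := hR.symm.exists_run h' hr' h0'
      exact (ih hφ (hRr 1).symm).1 (hsat r hr h0)
    · intro hsat r hr h0
      obtain ⟨r', hr', h0', hRr⟩ := hR.exists_run h hr h0
      exact (ih hφ (hRr 1)).2 (hsat r' hr' h0')
  | au φ ψ ih₁ ih₂ =>
    have hφ₁ := Finset.union_subset_left hφ
    have hφ₂ := Finset.union_subset_right hφ
    constructor
    · intro hsat r' hr' h0'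
      obtain ⟨r, hr, h0, hRr⟩ := hR.symm.exists_run h' hr' h0'
      obtain ⟨k, hk, hj⟩ := hsat r hr h0
      exact ⟨k, (ih₂ hφ₂ (hRr k).symm).1 hk, fun j hjk => (ih₁ hφ₁ (hRr j).symm).1 (hj j hjk)⟩
    · intro hsat r hr h0
      obtain ⟨r', hr', h0', hRr⟩ := hR.exists_run h hr h0
      obtain ⟨k, hk, hj⟩ := hsat r' hr' h0'
      exact ⟨k, (ih₂ hφ₂ (hRr k)).2 hk, fun j hjk => (ih₁ hφ₁ (hRr j)).2 (hj j hjk)⟩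
  | eu φ ψ ih₁ ih₂ =>
    have hφ₁ := Finset.union_subset_left hφ
    have hφ₂ := Finset.union_subset_right hφ
    constructor
    · rintro ⟨r, hr, h0, k, hk, hj⟩
      obtain ⟨r', hr', h0', hRr⟩ := hR.exists_run h hr h0
      exact ⟨r', hr', h0', k, (ih₂ hφ₂ (hRr k)).1 hk,
        fun j hjk => (ih₁ hφ₁ (hRr j)).1 (hj j hjk)⟩
    · rintro ⟨r', hr', h0', k, hk, hj⟩
      obtain ⟨r, hr, h0, hRr⟩ := hR.symm.exists_run h' hr' h0'
      exact ⟨r, hr, h0, k, (ih₂ hφ₂ (hRr k).symm).2 hk,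
        fun j hjk => (ih₁ hφ₁ (hRr j).symm).2 (hj j hjk)⟩
  | know i φ ih =>
    constructor
    · intro hsat t' ht'
      obtain ⟨t, ht, hRt⟩ := hR.symm.exists_epi h' ht'
      exact (ih hφ hRt.symm).1 (hsat t ht)
    · intro hsat t ht
      obtain ⟨t', ht', hRt⟩ := hR.exists_epi h ht
      exact (ih hφ hRt).2 (hsat t' ht')
  | ck φ ih =>
    constructor
    · intro hsat t' ht'
      obtain ⟨t, ht, hRt⟩ := hR.symm.exists_transGen h' ht'
      exact (ih hφ hRt.symm).1 (hsat t ht)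
    · intro hsat t ht
      obtain ⟨t', ht', hRt⟩ := hR.exists_transGen h ht
      exact (ih hφ hRt).2 (hsat t' ht')

theorem Linked.exists_corr (h : Linked cst cst' M M' b V) (hcst' : Function.Injective cst')
    (f : U → U')
    (hf : ∀ c, f (cst c) = cst' c) (σ : ℕ → U) :
    ∃ σ', Corr cst cst' M M' V σ σ' M.s0 M'.s0 := by
  have hinj : InjOn f (range cst) := by
    rintro _ ⟨c, rfl⟩ _ ⟨d, rfl⟩ hcd
    rw [hf, hf] at hcd
    rw [hcst' hcd]
  obtain ⟨g, hgf, hg⟩ := h.exists_extension (E := σ '' V) M.s0_mem M.s0_mem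
    (subset_union_right.trans subset_union_left) (V.finite_toSet.image σ)
    ((ncard_image_le V.finite_toSet).trans ((ncard_coe_finset V).le.trans (le_max_left _ _))) hinj
  have hgc : ∀ c, g (cst c) = cst' c := fun c => (hgf (mem_range_self c)).trans (hf c)
  rw [union_self] at hg
  exact ⟨g ∘ σ, M.s0_mem, M'.s0_mem, g, hg, hgc, (h.map_init g hgc).symm, fun _ _ => rfl⟩

theorem Linked.satM_of_satM (h : Linked cst cst' M M' b V) (h' : Linked cst' cst M' M b V)
    {φ : FOCTLK D C n} (hφ : φ.vars ⊆ V) (hcst' : Function.Injective cst') (f : U → U')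
    (hf : ∀ c, f (cst c) = cst' c) (hsat : FOCTLK.satM cst' M' φ) : FOCTLK.satM cst M φ := by
  intro σ
  obtain ⟨σ', hR⟩ := h.exists_corr hcst' f hf σ
  exact (hR.sat_iff h h' hφ).2 (hsat σ')

end Transfer

/-! ### STATEMENT 14 -/

theorem statement14
    {D : Schema} {C : Type} [Fintype C] {n : ℕ}
    {sig : Fin (n+1) → AgentSig} {U U' : Type} [Infinite U]
    (cst : C → U) (cst' : C → U')
    (hcst : Function.Injective cst) (hcst' : Function.Injective cst')
    {Ag : ∀ i, Agent D (sig i) U} {Ag' : ∀ i, Agent D (sig i) U'}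
    (M : ACMAS D sig Ag) (M' : ACMAS D sig Ag')
    (hM : M.Std) (hM' : M'.Std)
    (hu : Uniform cst M)
    (b : ℕ) (hb : BBounded M b)
    (h0 : adomF M.s0 ⊆ Set.range cst)
    (φ : FOCTLK D C n)
    (hcard : ((2*b + Nat.card C + max φ.vars.card (NAg sig) : ℕ) : Cardinal) ≤
      Cardinal.mk U')
    (habs : IsOAbstraction cst cst' M M') :
    FOCTLK.satM cst M φ ↔ FOCTLK.satM cst' M' φ := by
  obtain ⟨ι, hι⟩ := habs.2.1.1
  have : Nonempty U' := ⟨ι (Classical.arbitrary U)⟩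
  obtain ⟨κ, hκ⟩ : ∃ κ : U' → U, ∀ c, κ (cst' c) = cst c :=
    ⟨Function.extend cst' cst fun _ => Classical.arbitrary U, fun c => hcst'.extend_apply _ _ c⟩
  have hs0' : M'.s0 = mapF ι M.s0 := hι.eq_mapF
  have hlink : Linked cst cst' M M' b φ.vars :=
    { reach := hM.2
      bounded := hb
      large := hcard
      map_init := fun f hf => by
        rw [hs0']
        refine mapF_congr fun u hu => ?_
        obtain ⟨c, rfl⟩ := h0 hu
        rw [hf, hι.2.1]
      transfers := habs.transfers }
  have hlink' : Linked cst' cst M' M b φ.vars :=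
    { reach := hM'.2
      bounded := habs.bBounded hM' hb
      large := Cardinal.natCast_le_aleph0.trans (Cardinal.aleph0_le_mk U)
      map_init := fun f hf => by
        rw [hs0', mapF_mapF, mapF_congr (g := id) ?_, mapF_id]
        intro u hu
        obtain ⟨c, rfl⟩ := h0 hu
        rw [Function.comp_apply, hι.2.1, hf, id]
      transfers := habs.transfers_symm hu.1 }
  exact ⟨hlink'.satM_of_satM hlink Finset.Subset.rfl hcst κ hκ,
    hlink.satM_of_satM hlink' Finset.Subset.rfl hcst' ι hι.2.1⟩
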